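/- Baxter's vertex-face correspondence: for all u, v ∈ ℂ (with every bracket and theta value appearing in a denominator nonzero), all ε₁, ε₂ ∈ {+1,−1}, and all a, b, c ∈ ℤ with |a−b| = |b−c| = 1, one has Σ_{ε₁', ε₂' ∈ {±1}} R̄(u−v)_{(ε₁,ε₂),(ε₁',ε₂')} · ψ_{ε₁'}(u)^a_b · ψ_{ε₂'}(v)^b_c = Σ_{b' ∈ {a−1, a+1}, |b'−c| = 1} ψ_{ε₂}(v)^a_{b'} · ψ_{ε₁}(u)^{b'}_c · W̄(a, b; b', c | u−v). -/

import Mathlib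

noncomputable section

open Complex Finset

namespace Ell

/-- `x^s = exp(-iπ s /(r τ))`. -/
def xp (τ : ℂ) (r : ℝ) (s : ℂ) : ℂ :=
  Complex.exp (-Complex.I * (Real.pi : ℂ) * s / ((r : ℂ) * τ))

/-- `Θ_p(z) = ∏_{j ≥ 0} (1 - z p^j)(1 - p^{j+1}/z)(1 - p^{j+1})`. -/
def Theta (p z : ℂ) : ℂ :=
  ∏' j : ℕ, ((1 - z * p ^ j) * (1 - p ^ (j + 1) / z) * (1 - p ^ (j + 1)))

/-- The bracket `[u] = x^{u²/r - u} Θ_p(x^{2u})` with `p = x^{2r}`. -/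
def br (τ : ℂ) (r : ℝ) (u : ℂ) : ℂ :=
  xp τ r (u ^ 2 / (r : ℂ) - u) * Theta (xp τ r (2 * (r : ℂ))) (xp τ r (2 * u))

/-- Elliptic shifted factorial `[u]_n = ∏_{j=0}^{n-1} [u+j]`. -/
def brF (τ : ℂ) (r : ℝ) (u : ℂ) (n : ℕ) : ℂ :=
  ∏ j ∈ Finset.range n, br τ r (u + (j : ℂ))

/-- Elliptic binomial coefficient `C_n^k(α,β,γ)`. -/
def Cnk (τ : ℂ) (r : ℝ) (k n : ℕ) (α β γ : ℂ) : ℂ :=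
  brF τ r 1 k / (brF τ r 1 n * brF τ r 1 (k - n)) *
    (brF τ r (α - γ) n * brF τ r (α + γ + (k : ℂ) - (n : ℂ)) n *
      brF τ r (α - β) (k - n) * brF τ r (α + β + (n : ℂ)) (k - n)) /
    (brF τ r (β - γ + (n : ℂ) - (k : ℂ)) n * brF τ r (γ - β - (n : ℂ)) (k - n) *
      brF τ r (β + γ) k)

/-- The elliptic 6j-symbol `R_n^m(α,β,γ,δ;k)`. -/
def Rnm (τ : ℂ) (r : ℝ) (k n m : ℕ) (α β γ δ : ℂ) : ℂ :=
  ∑ j ∈ Finset.range (min n m + 1),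
    Cnk τ r n j α γ (β + (k : ℂ) - (n : ℂ)) * Cnk τ r (k - j) (m - j) β (γ + (j : ℂ)) δ

/-- Terminating very-well-poised elliptic hypergeometric sum with explicit
truncation `N`:  `Σ_{j=0}^N ([u₀+2j]/[u₀]) ([u₀]_j/[1]_j) ∏ᵢ [uᵢ]_j/[u₀+1-uᵢ]_j`. -/
def Vsum (τ : ℂ) (r : ℝ) (u₀ : ℂ) (us : List ℂ) (N : ℕ) : ℂ :=
  ∑ j ∈ Finset.range (N + 1),
    br τ r (u₀ + 2 * (j : ℂ)) / br τ r u₀ * (brF τ r u₀ j / brF τ r 1 j) *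
      (us.map fun ui => brF τ r ui j / brF τ r (u₀ + 1 - ui) j).prod

/-- "Every bracket appearing in a denominator of `C_n^k(·,β,γ)` is nonzero". -/
def CdenomNZ (τ : ℂ) (r : ℝ) (k n : ℕ) (β γ : ℂ) : Prop :=
  brF τ r 1 n ≠ 0 ∧ brF τ r 1 (k - n) ≠ 0 ∧
    brF τ r (β - γ + (n : ℂ) - (k : ℂ)) n ≠ 0 ∧
    brF τ r (γ - β - (n : ℂ)) (k - n) ≠ 0 ∧ brF τ r (β + γ) k ≠ 0

/-- "Every bracket appearing in a denominator of `R_n^m(α,β,γ,δ;k)` is nonzero". -/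
def RdenomNZ (τ : ℂ) (r : ℝ) (k n m : ℕ) (β γ δ : ℂ) : Prop :=
  ∀ j ≤ min n m,
    CdenomNZ τ r n j γ (β + (k : ℂ) - (n : ℂ)) ∧
      CdenomNZ τ r (k - j) (m - j) (γ + (j : ℂ)) δ

/-- Jacobi theta `ϑ₁(v|σ)`. -/
def th1 (v σ : ℂ) : ℂ :=
  2 * Complex.exp (2 * (Real.pi : ℂ) * Complex.I * σ / 8) *
    (∏' n : ℕ, (1 - Complex.exp (2 * (Real.pi : ℂ) * Complex.I * σ) ^ (n + 1))) *
    Complex.sin ((Real.pi : ℂ) * v) *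
    ∏' n : ℕ,
      (1 - 2 * Complex.exp (2 * (Real.pi : ℂ) * Complex.I * σ) ^ (n + 1) *
            Complex.cos (2 * (Real.pi : ℂ) * v) +
        Complex.exp (2 * (Real.pi : ℂ) * Complex.I * σ) ^ (2 * (n + 1)))

/-- Jacobi theta `ϑ₀(v|σ)`. -/
def th0 (v σ : ℂ) : ℂ :=
  -Complex.I * Complex.exp ((Real.pi : ℂ) * Complex.I * (v + σ / 4)) * th1 (v + σ / 2) σ

/-- Jacobi theta `ϑ₂(v|σ)`. -/
def th2 (v σ : ℂ) : ℂ := th1 (v + 1 / 2) σ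

/-- Jacobi theta `ϑ₃(v|σ)`. -/
def th3 (v σ : ℂ) : ℂ :=
  Complex.exp ((Real.pi : ℂ) * Complex.I * (v + σ / 4)) * th1 (v + (σ + 1) / 2) σ

/-- Intertwining vector component `ψ_ε(u)^a_b`, `ε ∈ {1, -1}`. -/
def psi (τ : ℂ) (r : ℝ) (u : ℂ) (ε : ℤ) (a b : ℤ) : ℂ :=
  if ε = 1 then th0 ((((a : ℂ) - (b : ℂ)) * u + (a : ℂ)) / (2 * (r : ℂ))) (τ / 2)
  else th3 ((((a : ℂ) - (b : ℂ)) * u + (a : ℂ)) / (2 * (r : ℂ))) (τ / 2)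

/-- The constant `C = x^{-r/4} e^{-iπ/4} τ^{1/2}`. -/
def Cc (τ : ℂ) (r : ℝ) : ℂ :=
  xp τ r (-(r : ℂ) / 4) * Complex.exp (-(Real.pi : ℂ) * Complex.I / 4) * τ ^ (1 / 2 : ℂ)

/-- Dual intertwining vector component `ψ*_ε(u)^a_b = -ε(a-b) C² ψ_{-ε}(u-1)^a_b/(2[b][u])`. -/
def psiStar (τ : ℂ) (r : ℝ) (u : ℂ) (ε : ℤ) (a b : ℤ) : ℂ :=
  -(ε : ℂ) * ((a : ℂ) - (b : ℂ)) * Cc τ r ^ 2 * psi τ r (u - 1) (-ε) a b /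
    (2 * br τ r (b : ℂ) * br τ r u)

/-- Sign attached to a boolean. -/
def sg (b : Bool) : ℤ := if b then 1 else -1

/-- Canonical path from `a`: up for `j ≤ n`, down afterwards. -/
def cpathZ (a n : ℤ) (j : ℕ) : ℤ := if (j : ℤ) ≤ n then a + j else a + 2 * n - j

/-- Admissibility: `a - b ∈ {-k, -k+2, …, k}`. -/
def adm (k : ℕ) (a b : ℤ) : Prop := (a - b).natAbs ≤ k ∧ (a - b - (k : ℤ)) % 2 = 0

instance (k : ℕ) (a b : ℤ) : Decidable (adm k a b) := by unfold adm; infer_instance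

/-- Fused intertwining vector component `ψ^{(k)}_μ(u)^a_b` (zero if `a,b` not admissible). -/
def psiF (τ : ℂ) (r : ℝ) (k : ℕ) (μ : ℤ) (u : ℂ) (a b : ℤ) : ℂ :=
  if adm k a b then
    ∑ ε ∈ Finset.univ.filter fun ε : Fin k → Bool => (∑ j, sg (ε j)) = μ,
      ∏ j : Fin k,
        psi τ r (u + (k : ℂ) - (((j : ℕ) + 1 : ℕ) : ℂ)) (sg (ε j))
          (cpathZ a (((k : ℤ) - (a - b)) / 2) (j : ℕ))
          (cpathZ a (((k : ℤ) - (a - b)) / 2) ((j : ℕ) + 1))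
  else 0

/-- Partial-sum path attached to a sign sequence `δ`, starting at `a`. -/
def spath (k : ℕ) (a : ℤ) (δ : Fin k → Bool) (j : ℕ) : ℤ :=
  a + ∑ i ∈ Finset.range j, if h : i < k then sg (δ ⟨i, h⟩) else 0

/-- Fused dual intertwining vector component `ψ*^{(k)}_μ(u)^b_a`
(sum over all admissible paths from `a` to `b`; zero if not admissible). -/
def psiStarF (τ : ℂ) (r : ℝ) (k : ℕ) (μ : ℤ) (u : ℂ) (b a : ℤ) : ℂ :=
  if adm k a b then
    ∑ δ ∈ Finset.univ.filter fun δ : Fin k → Bool => (∑ j, sg (δ j)) = b - a,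
      ∏ j : Fin k,
        psiStar τ r (u + (k : ℂ) - (((j : ℕ) + 1 : ℕ) : ℂ))
          (if ((j : ℕ) + 1 : ℤ) ≤ ((k : ℤ) + μ) / 2 then 1 else -1)
          (spath k a δ ((j : ℕ) + 1)) (spath k a δ (j : ℕ))
  else 0

/-- The `L`-matrix `L^{(k)}(a,b;c,d|u) = Σ_μ ψ*^{(k)}_μ(u)^d_c ψ^{(k)}_μ(u)^a_b`. -/
def Lk (τ : ℂ) (r : ℝ) (k : ℕ) (u : ℂ) (a b c d : ℤ) : ℂ :=
  ∑ i ∈ Finset.range (k + 1),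
    psiStarF τ r k ((k : ℤ) - 2 * (i : ℤ)) u d c * psiF τ r k ((k : ℤ) - 2 * (i : ℤ)) u a b

/-- Normalized face weight `W̄(a,b;d,c|u)` (arguments ordered (NW, NE; SW, SE)). -/
def Wb (τ : ℂ) (r : ℝ) (u : ℂ) (a b d c : ℤ) : ℂ :=
  if b = a + 1 ∧ d = a + 1 ∧ c = a + 2 then 1
  else if b = a - 1 ∧ d = a - 1 ∧ c = a - 2 then 1
  else if b = a + 1 ∧ d = a + 1 ∧ c = a then
    br τ r ((a : ℂ) - u) * br τ r 1 / (br τ r (a : ℂ) * br τ r (1 + u))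
  else if b = a - 1 ∧ d = a - 1 ∧ c = a then
    br τ r ((a : ℂ) + u) * br τ r 1 / (br τ r (a : ℂ) * br τ r (1 + u))
  else if b = a + 1 ∧ d = a - 1 ∧ c = a then
    br τ r ((a : ℂ) + 1) * br τ r u / (br τ r (a : ℂ) * br τ r (1 + u))
  else if b = a - 1 ∧ d = a + 1 ∧ c = a then
    br τ r ((a : ℂ) - 1) * br τ r u / (br τ r (a : ℂ) * br τ r (1 + u))
  else 0

/-- Sequence with prescribed endpoints `d`, `c` and free interior values `f`. -/
def seqI (k : ℕ) (d c : ℤ) (f : Fin (k - 1) → ℤ) (j : ℕ) : ℤ :=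
  if h0 : j = 0 then d
  else if hj : j < k then f ⟨j - 1, by omega⟩ else c

/-- Fused face weight `W^{(k,1)}(a,b;d,c|u)`. -/
def Wk1 (τ : ℂ) (r : ℝ) (k : ℕ) (u : ℂ) (a b d c : ℤ) : ℂ :=
  if adm k a b then
    ∑' f : Fin (k - 1) → ℤ,
      ∏ j ∈ Finset.range k,
        Wb τ r (u + (k : ℂ) - ((j : ℂ) + 1))
          (cpathZ a (((k : ℤ) - (a - b)) / 2) j)
          (cpathZ a (((k : ℤ) - (a - b)) / 2) (j + 1))
          (seqI k d c f j) (seqI k d c f (j + 1))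
  else 0

/-- Fused face weight `W^{(k,l)}(a,b;d,c|u)`. -/
def Wkl (τ : ℂ) (r : ℝ) (k l : ℕ) (u : ℂ) (a b d c : ℤ) : ℂ :=
  if adm l b c then
    ∑' g : Fin (l - 1) → ℤ,
      ∏ i ∈ Finset.range l,
        Wk1 τ r k (u - (l : ℂ) + ((i : ℂ) + 1))
          (seqI l a d g i) (cpathZ b (((l : ℤ) - (b - c)) / 2) i)
          (seqI l a d g (i + 1)) (cpathZ b (((l : ℤ) - (b - c)) / 2) (i + 1))
  else 0

/-- Eight-vertex weight `ā(u)`. -/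
def aw (τ : ℂ) (r : ℝ) (u : ℂ) : ℂ :=
  th2 (1 / (2 * (r : ℂ))) (τ / 2) * th2 (u / (2 * (r : ℂ))) (τ / 2) /
    (th2 0 (τ / 2) * th2 ((1 + u) / (2 * (r : ℂ))) (τ / 2))

/-- Eight-vertex weight `b̄(u)`. -/
def bw (τ : ℂ) (r : ℝ) (u : ℂ) : ℂ :=
  th2 (1 / (2 * (r : ℂ))) (τ / 2) * th1 (u / (2 * (r : ℂ))) (τ / 2) /
    (th2 0 (τ / 2) * th1 ((1 + u) / (2 * (r : ℂ))) (τ / 2))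

/-- Eight-vertex weight `c̄(u)`. -/
def cw (τ : ℂ) (r : ℝ) (u : ℂ) : ℂ :=
  th1 (1 / (2 * (r : ℂ))) (τ / 2) * th2 (u / (2 * (r : ℂ))) (τ / 2) /
    (th2 0 (τ / 2) * th1 ((1 + u) / (2 * (r : ℂ))) (τ / 2))

/-- Eight-vertex weight `d̄(u)`. -/
def dw (τ : ℂ) (r : ℝ) (u : ℂ) : ℂ :=
  -(th1 (1 / (2 * (r : ℂ))) (τ / 2) * th1 (u / (2 * (r : ℂ))) (τ / 2)) /
    (th2 0 (τ / 2) * th2 ((1 + u) / (2 * (r : ℂ))) (τ / 2))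

/-- The normalized eight-vertex `R`-matrix entry `R̄(u)_{(ε₁,ε₂),(ε₁',ε₂')}`. -/
def Rbar (τ : ℂ) (r : ℝ) (u : ℂ) (e1 e2 e1' e2' : ℤ) : ℂ :=
  if e1' = e1 ∧ e2' = e2 ∧ e1 = e2 then aw τ r u
  else if e1' = e1 ∧ e2' = e2 ∧ e1 = -e2 then bw τ r u
  else if e1' = e2 ∧ e2' = e1 ∧ e1 = -e2 then cw τ r u
  else if e1' = -e1 ∧ e2' = -e2 ∧ e1 = e2 then dw τ r u
  else 0

/-- Sklyanin standard-basis vector `v_+(z)`. -/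
def vp (τ z : ℂ) : ℂ := th3 (2 * z) (2 * τ) - th2 (2 * z) (2 * τ)

/-- Sklyanin standard-basis vector `v_-(z)`. -/
def vm (τ z : ℂ) : ℂ := th3 (2 * z) (2 * τ) + th2 (2 * z) (2 * τ)



/-! Jacobi triple product. -/

def gB (q : ℂ) : ℕ → ℕ → ℂ
  | _, 0 => 1
  | 0, _ + 1 => 0
  | M + 1, j + 1 => gB q M j + q ^ (j + 1) * gB q M (j + 1)

lemma gB_zero_right (q : ℂ) (M : ℕ) : gB q M 0 = 1 := by cases M <;> rfl

lemma gB_of_lt (q : ℂ) : ∀ M j : ℕ, M < j → gB q M j = 0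
  | _, 0, h => by omega
  | 0, _ + 1, _ => rfl
  | M + 1, j + 1, h => by
    rw [gB, gB_of_lt q M j (by omega), gB_of_lt q M (j + 1) (by omega)]; ring

def qP (q : ℂ) (n : ℕ) : ℂ := ∏ i ∈ Finset.range n, (1 - q ^ (i + 1))

lemma qP_succ (q : ℂ) (n : ℕ) : qP q (n + 1) = qP q n * (1 - q ^ (n + 1)) := by
  rw [qP, Finset.prod_range_succ, qP]

lemma gB_mul (q : ℂ) : ∀ M i j : ℕ, i + j = M → gB q M j * (qP q i * qP q j) = qP q M
  | 0, i, j, h => by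
    obtain ⟨rfl, rfl⟩ : i = 0 ∧ j = 0 := by omega
    simp [gB, qP]
  | M + 1, i, 0, h => by
    have : i = M + 1 := by omega
    subst this
    rw [gB_zero_right]; simp [qP]
  | M + 1, 0, j + 1, h => by
    have : j = M := by omega
    subst this
    have h1 := gB_mul q j 0 j (by omega)
    rw [gB, gB_of_lt q j (j + 1) (by omega), qP_succ]
    linear_combination (1 - q ^ (j + 1)) * h1
  | M + 1, i + 1, j + 1, h => by
    have h1 := gB_mul q M (i + 1) j (by omega)
    have h2 := gB_mul q M i (j + 1) (by omega)
    have hM : M = i + j + 1 := by omega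
    rw [gB, qP_succ q M]
    rw [qP_succ q j] at h2 ⊢
    rw [qP_succ q i] at h1 ⊢
    have : q ^ (M + 1) = q ^ (i + 1) * q ^ (j + 1) := by rw [hM, ← pow_add]; congr 1; omega
    rw [this]
    linear_combination (1 - q ^ (j + 1)) * h1 + q ^ (j + 1) * (1 - q ^ (i + 1)) * h2

lemma rothe (q : ℂ) : ∀ (M : ℕ) (y : ℂ), ∏ j ∈ Finset.range M, (1 + y * q ^ j) =
    ∑ j ∈ Finset.range (M + 1), gB q M j * q ^ (j.choose 2) * y ^ j
  | 0, y => by simp [gB]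
  | M + 1, y => by
    rw [Finset.prod_range_succ', Finset.sum_range_succ']
    have h := rothe q M (y * q)
    have e : ∏ k ∈ Finset.range M, (1 + y * q ^ (k + 1)) =
        ∏ j ∈ Finset.range M, (1 + y * q * q ^ j) :=
      Finset.prod_congr rfl fun k _ => by ring
    rw [e, h]
    have e2 : ∑ j ∈ Finset.range (M + 1), gB q M j * q ^ (j.choose 2) * (y * q) ^ j =
        1 + ∑ j ∈ Finset.range (M + 1), gB q M (j + 1) * q ^ ((j + 1).choose 2) * (y * q) ^ (j + 1) := by
      rw [Finset.sum_range_succ', Finset.sum_range_succ _ M, gB_of_lt q M (M + 1) (by omega)]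
      simp [gB_zero_right, add_comm]
    rw [pow_zero, mul_one, mul_add, mul_one]
    nth_rw 1 [e2]
    rw [Finset.sum_mul, add_assoc, ← Finset.sum_add_distrib]
    simp only [gB_zero_right]
    rw [add_comm]
    congr 1
    · refine Finset.sum_congr rfl fun j _ => ?_
      rw [gB, Nat.choose_succ_succ' j 1, Nat.choose_one_right]
      ring
    · simp

def eC (z : ℂ) : ℂ := Complex.exp (2 * (Real.pi : ℂ) * Complex.I * z)

lemma eC_add (z w : ℂ) : eC (z + w) = eC z * eC w := by
  rw [eC, eC, eC, ← Complex.exp_add]; congr 1; ring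

lemma eC_nat (n : ℕ) (z : ℂ) : eC z ^ n = eC (n * z) := by
  rw [eC, eC, ← Complex.exp_nat_mul]; congr 1; ring

lemma eC_ne (z : ℂ) : eC z ≠ 0 := Complex.exp_ne_zero _

lemma eC_zero : eC 0 = 1 := by simp [eC]

lemma choose_two_cast (j : ℕ) : ((j.choose 2 : ℕ) : ℂ) = (j : ℂ) * ((j : ℂ) - 1) / 2 := by
  exact_mod_cast Nat.cast_choose_two ℂ j

lemma prod_flip (z σ : ℂ) : ∀ N : ℕ, ∏ j ∈ Finset.range N, (1 + eC (z - (N : ℂ) * σ) * eC σ ^ j) =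
    eC (N * z - (N : ℂ) * (N + 1) / 2 * σ) * ∏ j ∈ Finset.range N, (1 + eC σ ^ (j + 1) * eC (-z))
  | 0 => by simp [eC_zero]
  | N + 1 => by
    rw [Finset.prod_range_succ', Finset.prod_range_succ]
    have h := prod_flip z σ N
    have e : ∏ k ∈ Finset.range N, (1 + eC (z - ((N + 1 : ℕ) : ℂ) * σ) * eC σ ^ (k + 1)) =
        ∏ j ∈ Finset.range N, (1 + eC (z - (N : ℂ) * σ) * eC σ ^ j) :=
      Finset.prod_congr rfl fun k _ => by
        rw [eC_nat, eC_nat, ← eC_add, ← eC_add]; push_cast; ring_nf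
    rw [e, h]
    have e2 : eC (((N + 1 : ℕ) : ℂ) * z - ((N + 1 : ℕ) : ℂ) * (((N + 1 : ℕ) : ℂ) + 1) / 2 * σ) =
      eC (N * z - (N : ℂ) * (N + 1) / 2 * σ) * eC (z - ((N + 1 : ℕ) : ℂ) * σ) := by
      rw [← eC_add]; push_cast; ring_nf
    have e3 : eC (z - ((N + 1 : ℕ) : ℂ) * σ) * (eC σ ^ (N + 1) * eC (-z)) = 1 := by
      rw [eC_nat, ← eC_add, ← eC_add, ← eC_zero]; congr 1; ring
    rw [e2]
    simp only [pow_zero, mul_one]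
    linear_combination (-(eC (N * z - (N : ℂ) * (N + 1) / 2 * σ) *
      ∏ j ∈ Finset.range N, (1 + eC σ ^ (j + 1) * eC (-z)))) * e3

lemma fin_triple (z σ : ℂ) (N : ℕ) :
    (∏ j ∈ Finset.range N, (1 + eC σ ^ (j + 1) * eC (-z))) *
      ∏ j ∈ Finset.range N, (1 + eC z * eC σ ^ j) =
    ∑ j ∈ Finset.range (2 * N + 1), gB (eC σ) (2 * N) j *
      jacobiTheta₂_term ((j : ℤ) - N) (z - σ / 2) σ := by
  have h := rothe (eC σ) (2 * N) (eC (z - (N : ℂ) * σ))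
  rw [two_mul N, Finset.prod_range_add, prod_flip, ← two_mul N] at h
  have e : ∏ x ∈ Finset.range N, (1 + eC (z - (N : ℂ) * σ) * eC σ ^ (N + x)) =
      ∏ j ∈ Finset.range N, (1 + eC z * eC σ ^ j) :=
    Finset.prod_congr rfl fun k _ => by
      rw [eC_nat, eC_nat, ← eC_add, ← eC_add]; push_cast; ring_nf
  rw [e] at h
  refine mul_left_cancel₀ (eC_ne (N * z - (N : ℂ) * (N + 1) / 2 * σ)) ?_
  rw [← mul_assoc, h, Finset.mul_sum]
  refine Finset.sum_congr rfl fun j _ => ?_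
  rw [eC_nat, eC_nat, choose_two_cast, mul_assoc, ← eC_add, mul_left_comm]
  congr 1
  rw [eC, eC, jacobiTheta₂_term, ← Complex.exp_add]
  congr 1
  push_cast
  ring

lemma norm_eC_lt {σ : ℂ} (h : 0 < σ.im) : ‖eC σ‖ < 1 := by
  rw [eC, Complex.norm_exp]
  simp
  positivity

lemma summ_geo {q : ℂ} (h : ‖q‖ < 1) (c : ℂ) : Summable fun n : ℕ => ‖c * q ^ n‖ := by
  simp only [norm_mul, norm_pow]
  exact (summable_geometric_of_lt_one (norm_nonneg _) h).mul_left _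

lemma mult_geo {q : ℂ} (h : ‖q‖ < 1) (c : ℂ) : Multipliable fun n : ℕ => (1 + c * q ^ n) :=
  multipliable_one_add_of_summable (summ_geo h c)

lemma mult_q {q : ℂ} (h : ‖q‖ < 1) : Multipliable fun n : ℕ => (1 - q ^ (n + 1)) := by
  convert mult_geo h (-q) using 2
  ring

lemma one_sub_pow_ne {q : ℂ} (h : ‖q‖ < 1) (n : ℕ) : 1 - q ^ (n + 1) ≠ 0 := by
  intro h0
  have : ‖q ^ (n + 1)‖ = 1 := by rw [← sub_eq_zero.mp h0]; simp
  rw [norm_pow] at this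
  have := pow_lt_one₀ (norm_nonneg q) h (Nat.succ_ne_zero n)
  simp_all

lemma qinf_ne {q : ℂ} (h : ‖q‖ < 1) : ∏' n : ℕ, (1 - q ^ (n + 1)) ≠ 0 := by
  have := tprod_one_add_ne_zero_of_summable (f := fun n : ℕ => -q * q ^ n) (fun n => by
    have := one_sub_pow_ne h n
    intro h0; apply this; rw [← h0]; ring) (summ_geo h (-q))
  convert this using 3
  ring

lemma qP_ne {q : ℂ} (h : ‖q‖ < 1) (n : ℕ) : qP q n ≠ 0 :=
  Finset.prod_ne_zero_iff.mpr fun i _ => one_sub_pow_ne h i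

lemma qP_tendsto {q : ℂ} (h : ‖q‖ < 1) :
    Filter.Tendsto (qP q) Filter.atTop (nhds (∏' n : ℕ, (1 - q ^ (n + 1)))) :=
  (mult_q h).tendsto_prod_tprod_nat

/-- central Gauss coefficients, extended by zero -/
def cB (q : ℂ) (N : ℕ) (k : ℤ) : ℂ :=
  if -(N : ℤ) ≤ k ∧ k ≤ N then gB q (2 * N) (k + N).toNat else 0

lemma cB_eq {q : ℂ} (h : ‖q‖ < 1) (N : ℕ) (k : ℤ) (hk : -(N : ℤ) ≤ k ∧ k ≤ N) :
    cB q N k = qP q (2 * N) * ((qP q ((N : ℤ) - k).toNat)⁻¹ * (qP q (k + N).toNat)⁻¹) := by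
  rw [cB, if_pos hk, ← gB_mul q (2 * N) ((N : ℤ) - k).toNat (k + N).toNat (by omega)]
  have := qP_ne h ((N : ℤ) - k).toNat
  have := qP_ne h (k + N).toNat
  field_simp

lemma cB_bound {q : ℂ} (h : ‖q‖ < 1) : ∃ C : ℝ, ∀ N k, ‖cB q N k‖ ≤ C := by
  obtain ⟨C1, h1⟩ := (qP_tendsto h).norm.bddAbove_range
  obtain ⟨C2, h2⟩ := ((qP_tendsto h).inv₀ (qinf_ne h)).norm.bddAbove_range
  have h1 : ∀ n, ‖qP q n‖ ≤ C1 := fun n => h1 ⟨n, rfl⟩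
  have h2 : ∀ n, ‖(qP q n)⁻¹‖ ≤ C2 := fun n => h2 ⟨n, rfl⟩
  have hC1 : 0 ≤ C1 := (norm_nonneg _).trans (h1 0)
  have hC2 : 0 ≤ C2 := (norm_nonneg _).trans (h2 0)
  refine ⟨C1 * (C2 * C2), fun N k => ?_⟩
  by_cases hk : -(N : ℤ) ≤ k ∧ k ≤ N
  · rw [cB_eq h N k hk, norm_mul, norm_mul]
    gcongr
    · exact h1 _
    · exact h2 _
    · exact h2 _
  · rw [cB, if_neg hk, norm_zero]; positivity

lemma cB_tendsto {q : ℂ} (h : ‖q‖ < 1) (k : ℤ) :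
    Filter.Tendsto (fun N => cB q N k) Filter.atTop
      (nhds (∏' n : ℕ, (1 - q ^ (n + 1)))⁻¹) := by
  have hne := qinf_ne h
  have t0 : Filter.Tendsto (fun N : ℕ => 2 * N) Filter.atTop Filter.atTop :=
    Filter.tendsto_atTop_mono (fun n => by simp; omega) Filter.tendsto_id
  have t1 : Filter.Tendsto (fun N : ℕ => ((N : ℤ) - k).toNat) Filter.atTop Filter.atTop :=
    Filter.tendsto_atTop.mpr fun b => by
      filter_upwards [Filter.eventually_ge_atTop (b + k.natAbs)] with n hn
      omega
  have t2 : Filter.Tendsto (fun N : ℕ => (k + N).toNat) Filter.atTop Filter.atTop :=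
    Filter.tendsto_atTop.mpr fun b => by
      filter_upwards [Filter.eventually_ge_atTop (b + k.natAbs)] with n hn
      omega
  have T := ((qP_tendsto h).comp t0).mul ((((qP_tendsto h).comp t1).inv₀ hne).mul
    (((qP_tendsto h).comp t2).inv₀ hne))
  rw [mul_inv_cancel_left₀ hne] at T
  refine T.congr' ?_
  filter_upwards [Filter.eventually_ge_atTop k.natAbs] with N hN
  rw [cB_eq h N k (by omega)]
  rfl

lemma fin_triple' (z σ : ℂ) (N : ℕ) :
    (∏ j ∈ Finset.range N, (1 + eC σ ^ (j + 1) * eC (-z))) *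
      ∏ j ∈ Finset.range N, (1 + eC z * eC σ ^ j) =
    ∑' k : ℤ, cB (eC σ) N k * jacobiTheta₂_term k (z - σ / 2) σ := by
  rw [fin_triple, tsum_eq_sum (s := Finset.Icc (-(N : ℤ)) N)]
  · refine Finset.sum_nbij' (fun j => (j : ℤ) - N) (fun k => (k + N).toNat) ?_ ?_ ?_ ?_ ?_
    · intro j hj; simp at hj ⊢; omega
    · intro j hj; simp at hj ⊢; omega
    · intro j hj; simp
    · intro j hj; simp at hj ⊢; omega
    · intro j hj
      simp only [Finset.mem_range] at hj
      rw [cB, if_pos (by omega)]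
      simp
  · intro k hk
    rw [cB, if_neg (by simpa using hk), zero_mul]

lemma triple (z : ℂ) {σ : ℂ} (h : 0 < σ.im) :
    (∏' n : ℕ, (1 - eC σ ^ (n + 1))) * ((∏' n : ℕ, (1 + eC σ ^ (n + 1) * eC (-z))) *
      ∏' n : ℕ, (1 + eC z * eC σ ^ n)) = jacobiTheta₂ (z - σ / 2) σ := by
  have hq := norm_eC_lt h
  obtain ⟨C, hC⟩ := cB_bound hq
  have m1 : Multipliable fun n : ℕ => (1 + eC σ ^ (n + 1) * eC (-z)) := by
    convert mult_geo hq (eC σ * eC (-z)) using 2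
    ring
  have T1 := m1.tendsto_prod_tprod_nat.mul (mult_geo hq (eC z)).tendsto_prod_tprod_nat
  have hs := (summable_jacobiTheta₂_term_iff (z - σ / 2) σ).mpr h
  have T2 : Filter.Tendsto (fun N => ∑' k : ℤ, cB (eC σ) N k * jacobiTheta₂_term k (z - σ / 2) σ)
      Filter.atTop (nhds (∑' k : ℤ, (∏' n : ℕ, (1 - eC σ ^ (n + 1)))⁻¹ *
        jacobiTheta₂_term k (z - σ / 2) σ)) := by
    refine tendsto_tsum_of_dominated_convergence (hs.norm.mul_left C) ?_ ?_
    · intro k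
      exact (cB_tendsto hq k).mul_const _
    · refine Filter.Eventually.of_forall fun N k => ?_
      rw [norm_mul]
      gcongr
      exact hC N k
  simp_rw [← fin_triple'] at T2
  have := tendsto_nhds_unique T1 T2
  rw [this, tsum_mul_left, mul_inv_cancel_left₀ (qinf_ne hq)]
  rfl

/-! Theta functions through `jacobiTheta₂`. -/

lemma eC_half (v : ℂ) : eC (v + 1 / 2) = -eC v := by
  rw [eC_add, eC, eC, show 2 * (Real.pi : ℂ) * Complex.I * (1 / 2) = Real.pi * Complex.I by ring,
    Complex.exp_pi_mul_I, mul_neg, mul_one]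

lemma eC_neg_half (v : ℂ) : eC (-(v + 1 / 2)) = -eC (-v) := by
  have h := eC_half (-(v + 1 / 2))
  rw [show -(v + 1 / 2) + 1 / 2 = -v by ring] at h
  rw [h, neg_neg]

lemma eC_mul_neg (v : ℂ) : eC v * eC (-v) = 1 := by
  rw [← eC_add, add_neg_cancel, eC_zero]

lemma mult_c' {q : ℂ} (h : ‖q‖ < 1) (c : ℂ) : Multipliable fun n : ℕ => (1 - q ^ (n + 1) * c) := by
  convert mult_geo h (-(q * c)) using 2
  ring

lemma mult_c {q : ℂ} (h : ‖q‖ < 1) (c : ℂ) : Multipliable fun n : ℕ => (1 - c * q ^ n) := by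
  convert mult_geo h (-c) using 2
  ring

lemma triple' (v : ℂ) {σ : ℂ} (h : 0 < σ.im) :
    (∏' n : ℕ, (1 - eC σ ^ (n + 1))) * ((∏' n : ℕ, (1 - eC σ ^ (n + 1) * eC (-v))) *
      ∏' n : ℕ, (1 - eC v * eC σ ^ n)) = jacobiTheta₂ (v + 1 / 2 - σ / 2) σ := by
  rw [← triple (v + 1 / 2) h, eC_half, eC_neg_half]
  simp only [mul_neg, neg_mul, ← sub_eq_add_neg]

lemma Theta_eq (v : ℂ) {σ : ℂ} (h : 0 < σ.im) :
    Theta (eC σ) (eC v) = jacobiTheta₂ (v + 1 / 2 - σ / 2) σ := by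
  have hq := norm_eC_lt h
  rw [← triple' v h, Theta]
  have e : eC (-v) = (eC v)⁻¹ := eq_inv_of_mul_eq_one_right (eC_mul_neg v)
  simp_rw [div_eq_mul_inv, ← e]
  rw [Multipliable.tprod_mul ((mult_c hq _).mul (mult_c' hq _)) (mult_q hq),
    Multipliable.tprod_mul (mult_c hq _) (mult_c' hq _)]
  ring

lemma th1_eq (v : ℂ) {σ : ℂ} (h : 0 < σ.im) :
    th1 v σ = Complex.I * Complex.exp ((Real.pi : ℂ) * Complex.I * (σ / 4 - v)) *
      jacobiTheta₂ (v + 1 / 2 - σ / 2) σ := by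
  have hq := norm_eC_lt h
  have e0 : Complex.exp (2 * (Real.pi : ℂ) * Complex.I * σ) = eC σ := rfl
  rw [← triple' v h, th1]
  simp only [e0]
  have e1 : ∀ n : ℕ, (1 - 2 * eC σ ^ (n + 1) * Complex.cos (2 * (Real.pi : ℂ) * v) +
      eC σ ^ (2 * (n + 1))) = (1 - eC σ ^ (n + 1) * eC (-v)) * (1 - eC σ ^ (n + 1) * eC v) := by
    intro n
    have hc : 2 * Complex.cos (2 * (Real.pi : ℂ) * v) = eC v + eC (-v) := by
      rw [Complex.cos, eC, eC]; ring_nf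
    have := eC_mul_neg v
    rw [pow_mul']
    linear_combination (-eC σ ^ (n + 1)) * hc - eC σ ^ (n + 1) * eC σ ^ (n + 1) * this
  simp_rw [e1]
  rw [Multipliable.tprod_mul (mult_c' hq _) (mult_c' hq _)]
  have e2 : ∏' n : ℕ, (1 - eC v * eC σ ^ n) = (1 - eC v) * ∏' n : ℕ, (1 - eC σ ^ (n + 1) * eC v) := by
    rw [tprod_eq_zero_mul']
    · simp [mul_comm]
    · simpa [mul_comm] using mult_c' hq (eC v)
  rw [e2]
  have e3 : 2 * Complex.exp (2 * (Real.pi : ℂ) * Complex.I * σ / 8) * Complex.sin ((Real.pi : ℂ) * v) =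
      Complex.I * Complex.exp ((Real.pi : ℂ) * Complex.I * (σ / 4 - v)) * (1 - eC v) := by
    have a1 : Complex.exp ((Real.pi : ℂ) * Complex.I * (σ / 4 - v)) =
      Complex.exp (2 * (Real.pi : ℂ) * Complex.I * σ / 8) * Complex.exp (-(Real.pi * v) * Complex.I) := by
      rw [← Complex.exp_add]; ring_nf
    have a2 : Complex.exp (-(Real.pi * v) * Complex.I) * eC v = Complex.exp ((Real.pi * v) * Complex.I) := by
      rw [eC, ← Complex.exp_add]; ring_nf
    rw [a1, Complex.sin]
    linear_combination (Complex.I * Complex.exp (2 * (Real.pi : ℂ) * Complex.I * σ / 8)) * a2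
  linear_combination (∏' n : ℕ, (1 - eC σ ^ (n + 1))) * ((∏' n : ℕ, (1 - eC σ ^ (n + 1) * eC (-v))) *
    (∏' n : ℕ, (1 - eC σ ^ (n + 1) * eC v))) * e3

lemma th0_eq (v : ℂ) {σ : ℂ} (h : 0 < σ.im) : th0 v σ = jacobiTheta₂ (v + 1 / 2) σ := by
  rw [th0, th1_eq _ h, show v + σ / 2 + 1 / 2 - σ / 2 = v + 1 / 2 by ring]
  have : Complex.exp ((Real.pi : ℂ) * Complex.I * (v + σ / 4)) *
    Complex.exp ((Real.pi : ℂ) * Complex.I * (σ / 4 - (v + σ / 2))) = 1 := by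
    rw [← Complex.exp_add, ← Complex.exp_zero]; ring_nf
  linear_combination jacobiTheta₂ (v + 1 / 2) σ * this -
    jacobiTheta₂ (v + 1 / 2) σ * (Complex.exp ((Real.pi : ℂ) * Complex.I * (v + σ / 4)) *
    Complex.exp ((Real.pi : ℂ) * Complex.I * (σ / 4 - (v + σ / 2)))) * Complex.I_mul_I

lemma exp_neg_half : Complex.exp ((Real.pi : ℂ) * Complex.I * (-(1 / 2))) = -Complex.I := by
  rw [show (Real.pi : ℂ) * Complex.I * (-(1 / 2)) = -((Real.pi : ℂ) / 2) * Complex.I by ring,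
    Complex.exp_mul_I, Complex.cos_neg, Complex.sin_neg, Complex.cos_pi_div_two,
    Complex.sin_pi_div_two]
  ring

lemma th3_eq (v : ℂ) {σ : ℂ} (h : 0 < σ.im) : th3 v σ = jacobiTheta₂ v σ := by
  rw [th3, th1_eq _ h, show v + (σ + 1) / 2 + 1 / 2 - σ / 2 = v + 1 by ring, jacobiTheta₂_add_left]
  have : Complex.exp ((Real.pi : ℂ) * Complex.I * (v + σ / 4)) *
    Complex.exp ((Real.pi : ℂ) * Complex.I * (σ / 4 - (v + (σ + 1) / 2))) = -Complex.I := by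
    rw [← Complex.exp_add, ← exp_neg_half]; ring_nf
  linear_combination Complex.I * jacobiTheta₂ v σ * this - jacobiTheta₂ v σ * Complex.I_mul_I

lemma th2_eq (v : ℂ) {σ : ℂ} (h : 0 < σ.im) : th2 v σ =
    Complex.exp ((Real.pi : ℂ) * Complex.I * (σ / 4 - v)) * jacobiTheta₂ (v - σ / 2) σ := by
  rw [th2, th1_eq _ h, show v + 1 / 2 + 1 / 2 - σ / 2 = (v - σ / 2) + 1 by ring, jacobiTheta₂_add_left]
  have : Complex.exp ((Real.pi : ℂ) * Complex.I * (σ / 4 - (v + 1 / 2))) =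
    Complex.exp ((Real.pi : ℂ) * Complex.I * (σ / 4 - v)) * (-Complex.I) := by
    rw [← exp_neg_half, ← Complex.exp_add]; ring_nf
  rw [this]
  linear_combination (-(Complex.exp ((Real.pi : ℂ) * Complex.I * (σ / 4 - v)) *
    jacobiTheta₂ (v - σ / 2) σ)) * Complex.I_mul_I

lemma th2_eq' (v : ℂ) {σ : ℂ} (h : 0 < σ.im) : th2 v σ =
    Complex.exp ((Real.pi : ℂ) * Complex.I * (σ / 4 + v)) * jacobiTheta₂ (v + σ / 2) σ := by
  rw [th2_eq v h, show v + σ / 2 = (v - σ / 2) + σ by ring, jacobiTheta₂_add_left', ← mul_assoc,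
    ← Complex.exp_add]
  ring_nf

lemma th3_neg (v : ℂ) {σ : ℂ} (h : 0 < σ.im) : th3 (-v) σ = th3 v σ := by
  rw [th3_eq _ h, th3_eq _ h, jacobiTheta₂_neg_left]

lemma th0_neg (v : ℂ) {σ : ℂ} (h : 0 < σ.im) : th0 (-v) σ = th0 v σ := by
  rw [th0_eq _ h, th0_eq _ h, show -v + 1 / 2 = -(v - 1 / 2) by ring, jacobiTheta₂_neg_left,
    show v + 1 / 2 = (v - 1 / 2) + 1 by ring, jacobiTheta₂_add_left]

lemma th2_neg (v : ℂ) {σ : ℂ} (h : 0 < σ.im) : th2 (-v) σ = th2 v σ := by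
  rw [th2_eq _ h, th2_eq' _ h, show -v - σ / 2 = -(v + σ / 2) by ring, jacobiTheta₂_neg_left]
  ring_nf

lemma th1_neg (v σ : ℂ) : th1 (-v) σ = -th1 v σ := by
  simp only [th1, mul_neg, Complex.sin_neg, Complex.cos_neg, neg_mul]

lemma th1_add_one (v σ : ℂ) : th1 (v + 1) σ = -th1 v σ := by
  have a : (Real.pi : ℂ) * (v + 1) = Real.pi * v + Real.pi := by ring
  have b : 2 * (Real.pi : ℂ) * (v + 1) = 2 * Real.pi * v + 2 * Real.pi := by ring
  simp only [th1, a, b, Complex.sin_add_pi, Complex.cos_add_two_pi, mul_neg, neg_mul]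

lemma th2_add_one (v σ : ℂ) : th2 (v + 1) σ = -th2 v σ := by
  rw [th2, th2, ← th1_add_one]; ring_nf

lemma th3_add_one (v : ℂ) {σ : ℂ} (h : 0 < σ.im) : th3 (v + 1) σ = th3 v σ := by
  rw [th3_eq _ h, th3_eq _ h, jacobiTheta₂_add_left]

lemma th0_half (v : ℂ) {σ : ℂ} (h : 0 < σ.im) : th3 (v + 1 / 2) σ = th0 v σ := by
  rw [th3_eq _ h, th0_eq _ h]

lemma th1_half (v σ : ℂ) : th2 (v + 1 / 2) σ = -th1 v σ := by
  rw [th2, ← th1_add_one]; ring_nf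

/-- modular transformation of the bracket, up to a constant -/
lemma br_eq (τ : ℂ) (r : ℝ) (hτ : 0 < τ.im) (hr : 0 < r) :
    ∃ C : ℂ, ∀ u, br τ r u = C * th1 (u / r) τ := by
  have hr' : (r : ℂ) ≠ 0 := by exact_mod_cast hr.ne'
  have hτ' : τ ≠ 0 := by rintro rfl; simp at hτ
  have him : 0 < (-1 / τ).im := by
    rw [neg_div, Complex.neg_im, one_div, Complex.inv_im, neg_div, neg_neg]
    exact div_pos hτ (Complex.normSq_pos.mpr hτ')
  have hs : (-Complex.I * τ) ^ (1 / 2 : ℂ) ≠ 0 := by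
    rw [Complex.cpow_ne_zero_iff]; left; simp [hτ']
  refine ⟨(-Complex.I * τ) ^ (1 / 2 : ℂ) * Complex.exp (Real.pi * Complex.I * ((τ + 1) ^ 2 / (4 * τ) - τ / 4)) / Complex.I, fun u => ?_⟩
  have e1 : xp τ r (2 * (r : ℂ)) = eC (-1 / τ) := by
    rw [xp, eC]; congr 1; field_simp
  have e2 : xp τ r (2 * u) = eC (-(u / r) / τ) := by
    rw [xp, eC]; congr 1; field_simp
  rw [br, e1, e2, Theta_eq _ him, th1_eq _ hτ]
  have f := jacobiTheta₂_functional_equation (-(u / r) + τ / 2 + 1 / 2) τ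
  have g : -(u / r) / τ + 1 / 2 - (-1 / τ) / 2 = (-(u / r) + τ / 2 + 1 / 2) / τ := by
    field_simp
    ring
  rw [g]
  have g2 : jacobiTheta₂ (-(u / r) + τ / 2 + 1 / 2) τ = jacobiTheta₂ (u / r + 1 / 2 - τ / 2) τ := by
    rw [← jacobiTheta₂_neg_left, ← jacobiTheta₂_add_left]; congr 1; ring
  rw [← g2, f, xp]
  set Z := jacobiTheta₂ ((-(u / r) + τ / 2 + 1 / 2) / τ) (-1 / τ)
  field_simp
  rw [mul_comm _ Z]
  simp only [mul_assoc, ← Complex.exp_add]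
  congr 2
  field_simp
  ring

/-! Product formulas. -/

def parEquiv : (ℤ × ℤ) ⊕ (ℤ × ℤ) ≃ ℤ × ℤ where
  toFun := Sum.elim (fun x => (x.1 + x.2, x.1 - x.2)) (fun x => (x.1 + x.2 + 1, x.1 - x.2))
  invFun := fun y => if (y.1 + y.2) % 2 = 0 then Sum.inl ((y.1 + y.2) / 2, (y.1 - y.2) / 2)
    else Sum.inr ((y.1 + y.2 - 1) / 2, (y.1 - y.2 - 1) / 2)
  left_inv := by
    rintro (⟨a, b⟩ | ⟨a, b⟩)
    · refine (if_pos (show (a + b + (a - b)) % 2 = 0 by omega)).trans ?_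
      simp only [Sum.elim_inl]
      congr 2 <;> omega
    · refine (if_neg (show ¬ (a + b + 1 + (a - b)) % 2 = 0 by omega)).trans ?_
      simp only [Sum.elim_inr]
      congr 2 <;> omega
  right_inv := by
    rintro ⟨a, b⟩
    by_cases h : (a + b) % 2 = 0
    · simp only [h, if_true, Sum.elim_inl, Prod.mk.injEq]; omega
    · simp only [h, if_false, Sum.elim_inr, Prod.mk.injEq]; omega

lemma im2 {σ : ℂ} (h : 0 < σ.im) : 0 < (2 * σ).im := by simpa using h

lemma J_mul (a b : ℂ) {σ : ℂ} (h : 0 < σ.im) :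
    jacobiTheta₂ a σ * jacobiTheta₂ b σ =
      jacobiTheta₂ (a + b) (2 * σ) * jacobiTheta₂ (a - b) (2 * σ) +
      Complex.exp (Real.pi * Complex.I * (2 * a + σ)) *
        (jacobiTheta₂ (a + b + σ) (2 * σ) * jacobiTheta₂ (a - b + σ) (2 * σ)) := by
  have s : ∀ (z : ℂ) {σ : ℂ}, 0 < σ.im → Summable fun n => ‖jacobiTheta₂_term n z σ‖ := fun z σ h =>
    ((summable_jacobiTheta₂_term_iff z σ).mpr h).norm
  have h2 := im2 h
  have hs := summable_mul_of_summable_norm (s a h) (s b h)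
  have hs' := parEquiv.summable_iff.mpr hs
  simp only [jacobiTheta₂]
  rw [tsum_mul_tsum_of_summable_norm (s a h) (s b h), tsum_mul_tsum_of_summable_norm (s _ h2) (s _ h2),
    tsum_mul_tsum_of_summable_norm (s _ h2) (s _ h2), ← parEquiv.tsum_eq, ← tsum_mul_left]
  refine (Summable.tsum_sum (hs'.comp_injective Sum.inl_injective)
    (hs'.comp_injective Sum.inr_injective)).trans ?_
  congr 1
  · refine tsum_congr fun ⟨k, l⟩ => ?_
    simp only [Function.comp, parEquiv, Equiv.coe_fn_mk, Sum.elim_inl, jacobiTheta₂_term, ← Complex.exp_add]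
    congr 1
    push_cast
    ring
  · refine tsum_congr fun ⟨k, l⟩ => ?_
    simp only [Function.comp, parEquiv, Equiv.coe_fn_mk, Sum.elim_inr, jacobiTheta₂_term, ← Complex.exp_add]
    congr 1
    push_cast
    ring

lemma F33 (a b : ℂ) {σ : ℂ} (h : 0 < σ.im) : th3 a σ * th3 b σ =
    th3 (a + b) (2 * σ) * th3 (a - b) (2 * σ) + th2 (a + b) (2 * σ) * th2 (a - b) (2 * σ) := by
  have h2 := im2 h
  rw [th3_eq _ h, th3_eq _ h, J_mul a b h, th3_eq _ h2, th3_eq _ h2, th2_eq' _ h2, th2_eq' _ h2,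
    mul_div_cancel_left₀ σ two_ne_zero]
  have e : Complex.exp (Real.pi * Complex.I * (2 * a + σ)) =
    Complex.exp (Real.pi * Complex.I * (2 * σ / 4 + (a + b))) *
    Complex.exp (Real.pi * Complex.I * (2 * σ / 4 + (a - b))) := by
    rw [← Complex.exp_add]; ring_nf
  rw [e]; ring

lemma F22 (a b : ℂ) {σ : ℂ} (h : 0 < σ.im) : th2 a σ * th2 b σ =
    th2 (a + b) (2 * σ) * th3 (a - b) (2 * σ) + th3 (a + b) (2 * σ) * th2 (a - b) (2 * σ) := by
  have h2 := im2 h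
  have k := J_mul (a - σ / 2) (b - σ / 2) h
  rw [show a - σ / 2 + (b - σ / 2) = a + b - σ by ring, show a - σ / 2 - (b - σ / 2) = a - b by ring,
    sub_add_cancel] at k
  rw [th2_eq a h, th2_eq b h, th3_eq _ h2, th3_eq _ h2, th2_eq _ h2, th2_eq' (a - b) h2,
    mul_div_cancel_left₀ σ two_ne_zero]
  have e1 : Complex.exp (Real.pi * Complex.I * (2 * σ / 4 - (a + b))) =
    Complex.exp (Real.pi * Complex.I * (σ / 4 - a)) * Complex.exp (Real.pi * Complex.I * (σ / 4 - b)) := by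
    rw [← Complex.exp_add]; ring_nf
  have e2 : Complex.exp (Real.pi * Complex.I * (2 * σ / 4 + (a - b))) =
    Complex.exp (Real.pi * Complex.I * (σ / 4 - a)) * Complex.exp (Real.pi * Complex.I * (σ / 4 - b)) *
    Complex.exp (Real.pi * Complex.I * (2 * (a - σ / 2) + σ)) := by
    rw [← Complex.exp_add, ← Complex.exp_add]; ring_nf
  rw [e1, e2]
  linear_combination Complex.exp (Real.pi * Complex.I * (σ / 4 - a)) *
    Complex.exp (Real.pi * Complex.I * (σ / 4 - b)) * k

lemma F00 (a b : ℂ) {σ : ℂ} (h : 0 < σ.im) : th0 a σ * th0 b σ =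
    th3 (a + b) (2 * σ) * th3 (a - b) (2 * σ) - th2 (a + b) (2 * σ) * th2 (a - b) (2 * σ) := by
  rw [← th0_half a h, ← th0_half b h, F33 _ _ h, show a + 1 / 2 + (b + 1 / 2) = a + b + 1 by ring,
    th3_add_one _ (im2 h), th2_add_one]
  ring_nf

lemma F11 (a b : ℂ) {σ : ℂ} (h : 0 < σ.im) : th1 a σ * th1 b σ =
    th3 (a + b) (2 * σ) * th2 (a - b) (2 * σ) - th2 (a + b) (2 * σ) * th3 (a - b) (2 * σ) := by
  rw [← neg_mul_neg, ← th1_half a, ← th1_half b, F22 _ _ h,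
    show a + 1 / 2 + (b + 1 / 2) = a + b + 1 by ring, th3_add_one _ (im2 h), th2_add_one]
  ring_nf

lemma F03 (a b : ℂ) {σ : ℂ} (h : 0 < σ.im) : th0 a σ * th3 b σ =
    th0 (a + b) (2 * σ) * th0 (a - b) (2 * σ) + th1 (a + b) (2 * σ) * th1 (a - b) (2 * σ) := by
  rw [← th0_half a h, F33 _ _ h, show a + 1 / 2 + b = a + b + 1 / 2 by ring,
    show a + 1 / 2 - b = a - b + 1 / 2 by ring, th0_half _ (im2 h), th0_half _ (im2 h), th1_half,
    th1_half]
  ring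

lemma F12 (a b : ℂ) {σ : ℂ} (h : 0 < σ.im) : th1 a σ * th2 b σ =
    th1 (a + b) (2 * σ) * th0 (a - b) (2 * σ) + th0 (a + b) (2 * σ) * th1 (a - b) (2 * σ) := by
  rw [← neg_neg (th1 a σ), ← th1_half a, neg_mul, F22 _ _ h, show a + 1 / 2 + b = a + b + 1 / 2 by ring,
    show a + 1 / 2 - b = a - b + 1 / 2 by ring, th0_half _ (im2 h), th0_half _ (im2 h), th1_half,
    th1_half]
  ring

/-! Theta identities behind the correspondence. -/

lemma W3 (x η w : ℂ) {σ : ℂ} (h : 0 < σ.im) :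
    th3 (η - w) σ * th3 (x + (η - w)) σ * (th1 x σ * th1 (2 * (η + w)) σ) =
      th3 (η + w) σ * (th1 (x - 2 * w) σ * th1 (2 * η) σ * th3 (x + (η + w)) σ +
        th1 (x + 2 * η) σ * th1 (2 * w) σ * th3 (x - (η + w)) σ) := by
  have a1 := F33 (x + (η - w)) (η - w) h
  have a2 := F11 x (2 * (η + w)) h
  have a3 := F33 (x + (η + w)) (η + w) h
  have a4 := F11 (x - 2 * w) (2 * η) h
  have a5 := F33 (x - (η + w)) (η + w) h
  have a6 := F11 (x + 2 * η) (2 * w) h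
  rw [show x + (η - w) + (η - w) = x + 2 * (η - w) by ring, add_sub_cancel_right] at a1
  rw [show x + (η + w) + (η + w) = x + 2 * (η + w) by ring, add_sub_cancel_right] at a3
  rw [show x - 2 * w + 2 * η = x + 2 * (η - w) by ring,
    show x - 2 * w - 2 * η = x - 2 * (η + w) by ring] at a4
  rw [show x - (η + w) - (η + w) = x - 2 * (η + w) by ring, sub_add_cancel] at a5
  rw [show x + 2 * η + 2 * w = x + 2 * (η + w) by ring,
    show x + 2 * η - 2 * w = x + 2 * (η - w) by ring] at a6
  calc _ = (th3 (x + (η - w)) σ * th3 (η - w) σ) * (th1 x σ * th1 (2 * (η + w)) σ) := by ring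
    _ = (th3 (x + (η + w)) σ * th3 (η + w) σ) * (th1 (x - 2 * w) σ * th1 (2 * η) σ) +
      (th3 (x - (η + w)) σ * th3 (η + w) σ) * (th1 (x + 2 * η) σ * th1 (2 * w) σ) := by
      rw [a1, a2, a3, a4, a5, a6]; ring
    _ = _ := by ring

lemma W2 (x η w : ℂ) {σ : ℂ} (h : 0 < σ.im) :
    th2 (η - w) σ * th2 (x + (η - w)) σ * (th1 x σ * th1 (2 * (η + w)) σ) =
      th2 (η + w) σ * (th1 (x - 2 * w) σ * th1 (2 * η) σ * th2 (x + (η + w)) σ +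
        th1 (x + 2 * η) σ * th1 (2 * w) σ * th2 (x - (η + w)) σ) := by
  have a1 := F22 (x + (η - w)) (η - w) h
  have a2 := F11 x (2 * (η + w)) h
  have a3 := F22 (x + (η + w)) (η + w) h
  have a4 := F11 (x - 2 * w) (2 * η) h
  have a5 := F22 (x - (η + w)) (η + w) h
  have a6 := F11 (x + 2 * η) (2 * w) h
  rw [show x + (η - w) + (η - w) = x + 2 * (η - w) by ring, add_sub_cancel_right] at a1
  rw [show x + (η + w) + (η + w) = x + 2 * (η + w) by ring, add_sub_cancel_right] at a3
  rw [show x - 2 * w + 2 * η = x + 2 * (η - w) by ring,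
    show x - 2 * w - 2 * η = x - 2 * (η + w) by ring] at a4
  rw [show x - (η + w) - (η + w) = x - 2 * (η + w) by ring, sub_add_cancel] at a5
  rw [show x + 2 * η + 2 * w = x + 2 * (η + w) by ring,
    show x + 2 * η - 2 * w = x + 2 * (η - w) by ring] at a6
  calc _ = (th2 (x + (η - w)) σ * th2 (η - w) σ) * (th1 x σ * th1 (2 * (η + w)) σ) := by ring
    _ = (th2 (x + (η + w)) σ * th2 (η + w) σ) * (th1 (x - 2 * w) σ * th1 (2 * η) σ) +
      (th2 (x - (η + w)) σ * th2 (η + w) σ) * (th1 (x + 2 * η) σ * th1 (2 * w) σ) := by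
      rw [a1, a2, a3, a4, a5, a6]; ring
    _ = _ := by ring

lemma W0 (x η w : ℂ) {σ : ℂ} (h : 0 < σ.im) :
    th0 (η - w) σ * th0 (x + (η - w)) σ * (th1 x σ * th1 (2 * (η + w)) σ) =
      th0 (η + w) σ * (th1 (x - 2 * w) σ * th1 (2 * η) σ * th0 (x + (η + w)) σ +
        th1 (x + 2 * η) σ * th1 (2 * w) σ * th0 (x - (η + w)) σ) := by
  have a1 := F00 (x + (η - w)) (η - w) h
  have a2 := F11 x (2 * (η + w)) h
  have a3 := F00 (x + (η + w)) (η + w) h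
  have a4 := F11 (x - 2 * w) (2 * η) h
  have a5 := F00 (x - (η + w)) (η + w) h
  have a6 := F11 (x + 2 * η) (2 * w) h
  rw [show x + (η - w) + (η - w) = x + 2 * (η - w) by ring, add_sub_cancel_right] at a1
  rw [show x + (η + w) + (η + w) = x + 2 * (η + w) by ring, add_sub_cancel_right] at a3
  rw [show x - 2 * w + 2 * η = x + 2 * (η - w) by ring,
    show x - 2 * w - 2 * η = x - 2 * (η + w) by ring] at a4
  rw [show x - (η + w) - (η + w) = x - 2 * (η + w) by ring, sub_add_cancel] at a5
  rw [show x + 2 * η + 2 * w = x + 2 * (η + w) by ring,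
    show x + 2 * η - 2 * w = x + 2 * (η - w) by ring] at a6
  calc _ = (th0 (x + (η - w)) σ * th0 (η - w) σ) * (th1 x σ * th1 (2 * (η + w)) σ) := by ring
    _ = (th0 (x + (η + w)) σ * th0 (η + w) σ) * (th1 (x - 2 * w) σ * th1 (2 * η) σ) +
      (th0 (x - (η + w)) σ * th0 (η + w) σ) * (th1 (x + 2 * η) σ * th1 (2 * w) σ) := by
      rw [a1, a2, a3, a4, a5, a6]; ring
    _ = _ := by ring

lemma W1 (x η w : ℂ) {σ : ℂ} (h : 0 < σ.im) :
    th1 (η - w) σ * th1 (x + (η - w)) σ * (th1 x σ * th1 (2 * (η + w)) σ) =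
      th1 (η + w) σ * (th1 (x - 2 * w) σ * th1 (2 * η) σ * th1 (x + (η + w)) σ -
        th1 (x + 2 * η) σ * th1 (2 * w) σ * th1 (x - (η + w)) σ) := by
  have a1 := F11 (x + (η - w)) (η - w) h
  have a2 := F11 x (2 * (η + w)) h
  have a3 := F11 (x + (η + w)) (η + w) h
  have a4 := F11 (x - 2 * w) (2 * η) h
  have a5 := F11 (x - (η + w)) (η + w) h
  have a6 := F11 (x + 2 * η) (2 * w) h
  rw [show x + (η - w) + (η - w) = x + 2 * (η - w) by ring, add_sub_cancel_right] at a1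
  rw [show x + (η + w) + (η + w) = x + 2 * (η + w) by ring, add_sub_cancel_right] at a3
  rw [show x - 2 * w + 2 * η = x + 2 * (η - w) by ring,
    show x - 2 * w - 2 * η = x - 2 * (η + w) by ring] at a4
  rw [show x - (η + w) - (η + w) = x - 2 * (η + w) by ring, sub_add_cancel] at a5
  rw [show x + 2 * η + 2 * w = x + 2 * (η + w) by ring,
    show x + 2 * η - 2 * w = x + 2 * (η - w) by ring] at a6
  calc _ = (th1 (x + (η - w)) σ * th1 (η - w) σ) * (th1 x σ * th1 (2 * (η + w)) σ) := by ring
    _ = (th1 (x + (η + w)) σ * th1 (η + w) σ) * (th1 (x - 2 * w) σ * th1 (2 * η) σ) -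
      (th1 (x - (η + w)) σ * th1 (η + w) σ) * (th1 (x + 2 * η) σ * th1 (2 * w) σ) := by
      rw [a1, a2, a3, a4, a5, a6]; ring
    _ = _ := by ring

lemma D2 (P : ℂ) {σ : ℂ} (h : 0 < σ.im) :
    th2 0 σ * th2 P σ = 2 * (th3 P (2 * σ) * th2 P (2 * σ)) := by
  rw [mul_comm, F22 P 0 h, add_zero, sub_zero]; ring

lemma D1 (P : ℂ) {σ : ℂ} (h : 0 < σ.im) :
    th2 0 σ * th1 P σ = 2 * (th0 P (2 * σ) * th1 P (2 * σ)) := by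
  rw [mul_comm, F12 P 0 h, add_zero, sub_zero]; ring

lemma Gb (η w : ℂ) {σ : ℂ} (h : 0 < σ.im) : th2 η σ * th1 w σ =
    th1 (η + w) (2 * σ) * th0 (η - w) (2 * σ) - th0 (η + w) (2 * σ) * th1 (η - w) (2 * σ) := by
  rw [mul_comm, F12 w η h, add_comm w η, show w - η = -(η - w) by ring, th0_neg _ (im2 h), th1_neg]
  ring

/-- products with prescribed sum and difference -/
lemma P00 {a b S D : ℂ} {σ : ℂ} (h : 0 < σ.im) (hS : a + b = S) (hD : a - b = D) : th0 a σ * th0 b σ =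
    th3 S (2 * σ) * th3 D (2 * σ) - th2 S (2 * σ) * th2 D (2 * σ) := by
  rw [← hS, ← hD]; exact F00 a b h

lemma P33 {a b S D : ℂ} {σ : ℂ} (h : 0 < σ.im) (hS : a + b = S) (hD : a - b = D) : th3 a σ * th3 b σ =
    th3 S (2 * σ) * th3 D (2 * σ) + th2 S (2 * σ) * th2 D (2 * σ) := by
  rw [← hS, ← hD]; exact F33 a b h

lemma P03 {a b S D : ℂ} {σ : ℂ} (h : 0 < σ.im) (hS : a + b = S) (hD : a - b = D) : th0 a σ * th3 b σ =
    th0 S (2 * σ) * th0 D (2 * σ) + th1 S (2 * σ) * th1 D (2 * σ) := by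
  rw [← hS, ← hD]; exact F03 a b h

lemma P30 {a b S D : ℂ} {σ : ℂ} (h : 0 < σ.im) (hS : a + b = S) (hD : a - b = D) : th3 a σ * th0 b σ =
    th0 S (2 * σ) * th0 D (2 * σ) - th1 S (2 * σ) * th1 D (2 * σ) := by
  rw [mul_comm, F03 b a h, ← hS, ← hD, add_comm b a, ← neg_sub a b, th0_neg _ (im2 h), th1_neg]
  ring

lemma S00 (x η w : ℂ) {σ : ℂ} (h : 0 < σ.im) :
    th2 η σ * th2 w σ * (th0 x σ * th0 (x + η + w) σ) -
      th1 η σ * th1 w σ * (th3 x σ * th3 (x + η + w) σ) =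
    th2 0 σ * th2 (η + w) σ * (th0 (x + w) σ * th0 (x + η) σ) := by
  rw [D2 _ h, F22 η w h, F11 η w h,
    mul_comm (th0 x σ), P00 h (show x + η + w + x = 2 * x + η + w by ring) (show _ = η + w by ring),
    mul_comm (th3 x σ), P33 h (show x + η + w + x = 2 * x + η + w by ring) (show _ = η + w by ring),
    mul_comm (th0 (x + w) σ), P00 h (show x + η + (x + w) = 2 * x + η + w by ring) (show _ = η - w by ring)]
  ring

lemma S33 (x η w : ℂ) {σ : ℂ} (h : 0 < σ.im) :
    th2 η σ * th2 w σ * (th3 x σ * th3 (x + η + w) σ) -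
      th1 η σ * th1 w σ * (th0 x σ * th0 (x + η + w) σ) =
    th2 0 σ * th2 (η + w) σ * (th3 (x + w) σ * th3 (x + η) σ) := by
  rw [D2 _ h, F22 η w h, F11 η w h,
    mul_comm (th3 x σ), P33 h (show x + η + w + x = 2 * x + η + w by ring) (show _ = η + w by ring),
    mul_comm (th0 x σ), P00 h (show x + η + w + x = 2 * x + η + w by ring) (show _ = η + w by ring),
    mul_comm (th3 (x + w) σ), P33 h (show x + η + (x + w) = 2 * x + η + w by ring) (show _ = η - w by ring)]
  ring

lemma S03 (x η w : ℂ) {σ : ℂ} (h : 0 < σ.im) :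
    th2 η σ * th1 w σ * (th0 x σ * th3 (x + η + w) σ) +
      th1 η σ * th2 w σ * (th3 x σ * th0 (x + η + w) σ) =
    th2 0 σ * th1 (η + w) σ * (th3 (x + w) σ * th0 (x + η) σ) := by
  rw [D1 _ h, Gb η w h, F12 η w h,
    mul_comm (th0 x σ), P30 h (show x + η + w + x = 2 * x + η + w by ring) (show _ = η + w by ring),
    mul_comm (th3 x σ), P03 h (show x + η + w + x = 2 * x + η + w by ring) (show _ = η + w by ring),
    mul_comm (th3 (x + w) σ), P03 h (show x + η + (x + w) = 2 * x + η + w by ring) (show _ = η - w by ring)]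
  ring

lemma S30 (x η w : ℂ) {σ : ℂ} (h : 0 < σ.im) :
    th2 η σ * th1 w σ * (th3 x σ * th0 (x + η + w) σ) +
      th1 η σ * th2 w σ * (th0 x σ * th3 (x + η + w) σ) =
    th2 0 σ * th1 (η + w) σ * (th0 (x + w) σ * th3 (x + η) σ) := by
  rw [D1 _ h, Gb η w h, F12 η w h,
    mul_comm (th3 x σ), P03 h (show x + η + w + x = 2 * x + η + w by ring) (show _ = η + w by ring),
    mul_comm (th0 x σ), P30 h (show x + η + w + x = 2 * x + η + w by ring) (show _ = η + w by ring),
    mul_comm (th0 (x + w) σ), P30 h (show x + η + (x + w) = 2 * x + η + w by ring) (show _ = η - w by ring)]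
  ring

lemma T00 (A η w V : ℂ) {σ : ℂ} (h : 0 < σ.im) :
    (th2 η σ * th2 w σ * (th0 (A - (V + w)) σ * th0 (A + η + V) σ) -
      th1 η σ * th1 w σ * (th3 (A - (V + w)) σ * th3 (A + η + V) σ)) *
      (th1 (2 * A) (2 * σ) * th1 (2 * (η + w)) (2 * σ)) =
    th2 0 σ * th2 (η + w) σ *
      (th0 (A - V) σ * th0 (A + η + (V + w)) σ * (th1 (2 * A - 2 * w) (2 * σ) * th1 (2 * η) (2 * σ)) +
       th0 (A + V) σ * th0 (A - η - (V + w)) σ * (th1 (2 * A + 2 * η) (2 * σ) * th1 (2 * w) (2 * σ))) := by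
  have h2 := im2 h
  rw [D2 _ h, F22 η w h, F11 η w h,
    P00 h (show A - (V + w) + (A + η + V) = 2 * A + (η - w) by ring) (show _ = -(η + w + 2 * V) by ring),
    P33 h (show A - (V + w) + (A + η + V) = 2 * A + (η - w) by ring) (show _ = -(η + w + 2 * V) by ring),
    P00 h (show A - V + (A + η + (V + w)) = 2 * A + (η + w) by ring) (show _ = -(η + w + 2 * V) by ring),
    P00 h (show A + V + (A - η - (V + w)) = 2 * A - (η + w) by ring) (show _ = η + w + 2 * V by ring)]
  rw [th3_neg _ h2, th2_neg _ h2]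
  linear_combination 2 * th2 (η + w) (2 * σ) * th3 (η + w + 2 * V) (2 * σ) * W3 (2 * A) η w h2 -
    2 * th3 (η + w) (2 * σ) * th2 (η + w + 2 * V) (2 * σ) * W2 (2 * A) η w h2

lemma T33 (A η w V : ℂ) {σ : ℂ} (h : 0 < σ.im) :
    (th2 η σ * th2 w σ * (th3 (A - (V + w)) σ * th3 (A + η + V) σ) -
      th1 η σ * th1 w σ * (th0 (A - (V + w)) σ * th0 (A + η + V) σ)) *
      (th1 (2 * A) (2 * σ) * th1 (2 * (η + w)) (2 * σ)) =
    th2 0 σ * th2 (η + w) σ *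
      (th3 (A - V) σ * th3 (A + η + (V + w)) σ * (th1 (2 * A - 2 * w) (2 * σ) * th1 (2 * η) (2 * σ)) +
       th3 (A + V) σ * th3 (A - η - (V + w)) σ * (th1 (2 * A + 2 * η) (2 * σ) * th1 (2 * w) (2 * σ))) := by
  have h2 := im2 h
  rw [D2 _ h, F22 η w h, F11 η w h,
    P33 h (show A - (V + w) + (A + η + V) = 2 * A + (η - w) by ring) (show _ = -(η + w + 2 * V) by ring),
    P00 h (show A - (V + w) + (A + η + V) = 2 * A + (η - w) by ring) (show _ = -(η + w + 2 * V) by ring),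
    P33 h (show A - V + (A + η + (V + w)) = 2 * A + (η + w) by ring) (show _ = -(η + w + 2 * V) by ring),
    P33 h (show A + V + (A - η - (V + w)) = 2 * A - (η + w) by ring) (show _ = η + w + 2 * V by ring)]
  rw [th3_neg _ h2, th2_neg _ h2]
  linear_combination 2 * th2 (η + w) (2 * σ) * th3 (η + w + 2 * V) (2 * σ) * W3 (2 * A) η w h2 +
    2 * th3 (η + w) (2 * σ) * th2 (η + w + 2 * V) (2 * σ) * W2 (2 * A) η w h2

lemma T03 (A η w V : ℂ) {σ : ℂ} (h : 0 < σ.im) :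
    (th2 η σ * th1 w σ * (th0 (A - (V + w)) σ * th3 (A + η + V) σ) +
      th1 η σ * th2 w σ * (th3 (A - (V + w)) σ * th0 (A + η + V) σ)) *
      (th1 (2 * A) (2 * σ) * th1 (2 * (η + w)) (2 * σ)) =
    th2 0 σ * th1 (η + w) σ *
      (th3 (A - V) σ * th0 (A + η + (V + w)) σ * (th1 (2 * A - 2 * w) (2 * σ) * th1 (2 * η) (2 * σ)) +
       th3 (A + V) σ * th0 (A - η - (V + w)) σ * (th1 (2 * A + 2 * η) (2 * σ) * th1 (2 * w) (2 * σ))) := by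
  have h2 := im2 h
  rw [D1 _ h, Gb η w h, F12 η w h,
    P03 h (show A - (V + w) + (A + η + V) = 2 * A + (η - w) by ring) (show _ = -(η + w + 2 * V) by ring),
    P30 h (show A - (V + w) + (A + η + V) = 2 * A + (η - w) by ring) (show _ = -(η + w + 2 * V) by ring),
    P30 h (show A - V + (A + η + (V + w)) = 2 * A + (η + w) by ring) (show _ = -(η + w + 2 * V) by ring),
    P30 h (show A + V + (A - η - (V + w)) = 2 * A - (η + w) by ring) (show _ = η + w + 2 * V by ring)]
  rw [th0_neg _ h2, th1_neg]
  linear_combination 2 * th1 (η + w) (2 * σ) * th0 (η + w + 2 * V) (2 * σ) * W0 (2 * A) η w h2 +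
    2 * th0 (η + w) (2 * σ) * th1 (η + w + 2 * V) (2 * σ) * W1 (2 * A) η w h2

lemma T30 (A η w V : ℂ) {σ : ℂ} (h : 0 < σ.im) :
    (th2 η σ * th1 w σ * (th3 (A - (V + w)) σ * th0 (A + η + V) σ) +
      th1 η σ * th2 w σ * (th0 (A - (V + w)) σ * th3 (A + η + V) σ)) *
      (th1 (2 * A) (2 * σ) * th1 (2 * (η + w)) (2 * σ)) =
    th2 0 σ * th1 (η + w) σ *
      (th0 (A - V) σ * th3 (A + η + (V + w)) σ * (th1 (2 * A - 2 * w) (2 * σ) * th1 (2 * η) (2 * σ)) +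
       th0 (A + V) σ * th3 (A - η - (V + w)) σ * (th1 (2 * A + 2 * η) (2 * σ) * th1 (2 * w) (2 * σ))) := by
  have h2 := im2 h
  rw [D1 _ h, Gb η w h, F12 η w h,
    P30 h (show A - (V + w) + (A + η + V) = 2 * A + (η - w) by ring) (show _ = -(η + w + 2 * V) by ring),
    P03 h (show A - (V + w) + (A + η + V) = 2 * A + (η - w) by ring) (show _ = -(η + w + 2 * V) by ring),
    P03 h (show A - V + (A + η + (V + w)) = 2 * A + (η + w) by ring) (show _ = -(η + w + 2 * V) by ring),
    P03 h (show A + V + (A - η - (V + w)) = 2 * A - (η + w) by ring) (show _ = η + w + 2 * V by ring)]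
  rw [th0_neg _ h2, th1_neg]
  linear_combination 2 * th1 (η + w) (2 * σ) * th0 (η + w + 2 * V) (2 * σ) * W0 (2 * A) η w h2 -
    2 * th0 (η + w) (2 * σ) * th1 (η + w + 2 * V) (2 * σ) * W1 (2 * A) η w h2

lemma R11 (τ : ℂ) (r : ℝ) (w : ℂ) (F G : ℤ → ℂ) :
    ∑ x ∈ ({1, -1} : Finset ℤ), ∑ y ∈ ({1, -1} : Finset ℤ),
      Rbar τ r w 1 1 x y * F x * G y = aw τ r w * (F 1 * G 1) + dw τ r w * (F (-1) * G (-1)) := by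
  rw [Finset.sum_pair (by norm_num), Finset.sum_pair (by norm_num), Finset.sum_pair (by norm_num)]
  norm_num [Rbar]; ring

lemma R22 (τ : ℂ) (r : ℝ) (w : ℂ) (F G : ℤ → ℂ) :
    ∑ x ∈ ({1, -1} : Finset ℤ), ∑ y ∈ ({1, -1} : Finset ℤ),
      Rbar τ r w (-1) (-1) x y * F x * G y
        = aw τ r w * (F (-1) * G (-1)) + dw τ r w * (F 1 * G 1) := by
  rw [Finset.sum_pair (by norm_num), Finset.sum_pair (by norm_num), Finset.sum_pair (by norm_num)]
  norm_num [Rbar]; ring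

lemma R12 (τ : ℂ) (r : ℝ) (w : ℂ) (F G : ℤ → ℂ) :
    ∑ x ∈ ({1, -1} : Finset ℤ), ∑ y ∈ ({1, -1} : Finset ℤ),
      Rbar τ r w 1 (-1) x y * F x * G y
        = bw τ r w * (F 1 * G (-1)) + cw τ r w * (F (-1) * G 1) := by
  rw [Finset.sum_pair (by norm_num), Finset.sum_pair (by norm_num), Finset.sum_pair (by norm_num)]
  norm_num [Rbar]; ring

lemma R21 (τ : ℂ) (r : ℝ) (w : ℂ) (F G : ℤ → ℂ) :
    ∑ x ∈ ({1, -1} : Finset ℤ), ∑ y ∈ ({1, -1} : Finset ℤ),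
      Rbar τ r w (-1) 1 x y * F x * G y
        = bw τ r w * (F (-1) * G 1) + cw τ r w * (F 1 * G (-1)) := by
  rw [Finset.sum_pair (by norm_num), Finset.sum_pair (by norm_num), Finset.sum_pair (by norm_num)]
  norm_num [Rbar]; ring

lemma psi_p {τ : ℂ} (hτ : 0 < (τ / 2).im) (r : ℝ) (u : ℂ) (a b s : ℤ) (hs : s = 1 ∨ s = -1) (X : ℂ)
    (h : (((a : ℂ) - (b : ℂ)) * u + (a : ℂ)) / (2 * (r : ℂ)) = (s : ℂ) * X) :
    psi τ r u 1 a b = th0 X (τ / 2) := by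
  unfold psi
  rw [if_pos rfl, h]
  rcases hs with rfl | rfl
  · simp
  · push_cast; rw [neg_one_mul, th0_neg _ hτ]

lemma psi_m {τ : ℂ} (hτ : 0 < (τ / 2).im) (r : ℝ) (u : ℂ) (a b s : ℤ) (hs : s = 1 ∨ s = -1) (X : ℂ)
    (h : (((a : ℂ) - (b : ℂ)) * u + (a : ℂ)) / (2 * (r : ℂ)) = (s : ℂ) * X) :
    psi τ r u (-1) a b = th3 X (τ / 2) := by
  unfold psi
  rw [if_neg (by norm_num), h]
  rcases hs with rfl | rfl
  · simp
  · push_cast; rw [neg_one_mul, th3_neg _ hτ]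

lemma th1_s (s : ℤ) (hs : s = 1 ∨ s = -1) (X σ : ℂ) : th1 ((s : ℂ) * X) σ = (s : ℂ) * th1 X σ := by
  rcases hs with rfl | rfl
  · simp
  · push_cast; rw [neg_one_mul, th1_neg, neg_one_mul]

lemma Wb_straight (τ : ℂ) (r : ℝ) (w : ℂ) (a s : ℤ) (hs : s = 1 ∨ s = -1) :
    Wb τ r w a (a + s) (a + s) (a + 2 * s) = 1 := by
  unfold Wb
  rcases hs with rfl | rfl
  · rw [if_pos (by omega)]
  · rw [if_neg (by omega), if_pos (by omega)]

lemma Wb_t1 (τ : ℂ) (r : ℝ) (w : ℂ) (a s : ℤ) (hs : s = 1 ∨ s = -1) :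
    Wb τ r w a (a + s) (a + s) a =
      br τ r ((a : ℂ) - s * w) * br τ r 1 / (br τ r (a : ℂ) * br τ r (1 + w)) := by
  unfold Wb
  rcases hs with rfl | rfl
  · rw [if_neg (by omega), if_neg (by omega), if_pos (by omega)]; simp
  · rw [if_neg (by omega), if_neg (by omega), if_neg (by omega), if_pos (by omega)]; simp

lemma Wb_t2 (τ : ℂ) (r : ℝ) (w : ℂ) (a s : ℤ) (hs : s = 1 ∨ s = -1) :
    Wb τ r w a (a + s) (a - s) a =
      br τ r ((a : ℂ) + s) * br τ r w / (br τ r (a : ℂ) * br τ r (1 + w)) := by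
  unfold Wb
  rcases hs with rfl | rfl
  · rw [if_neg (by omega), if_neg (by omega), if_neg (by omega), if_neg (by omega),
      if_pos (by omega)]; simp
  · rw [if_neg (by omega), if_neg (by omega), if_neg (by omega), if_neg (by omega),
      if_neg (by omega), if_pos (by omega)]; simp [sub_eq_add_neg]

lemma sum_straight (a s : ℤ) (hs : s = 1 ∨ s = -1) (f : ℤ → ℂ) :
    ∑ x ∈ ({a - 1, a + 1} : Finset ℤ).filter (fun x => |x - (a + 2 * s)| = 1), f x = f (a + s) := by
  have : ({a - 1, a + 1} : Finset ℤ).filter (fun x => |x - (a + 2 * s)| = 1) = {a + s} := by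
    ext x
    simp only [Finset.mem_filter, Finset.mem_insert, Finset.mem_singleton]
    rw [abs_eq (by norm_num)]
    omega
  rw [this, Finset.sum_singleton]

lemma sum_turn (a s : ℤ) (hs : s = 1 ∨ s = -1) (f : ℤ → ℂ) :
    ∑ x ∈ ({a - 1, a + 1} : Finset ℤ).filter (fun x => |x - a| = 1), f x
      = f (a + s) + f (a - s) := by
  have : ({a - 1, a + 1} : Finset ℤ).filter (fun x => |x - a| = 1) = {a + s, a - s} := by
    ext x
    simp only [Finset.mem_filter, Finset.mem_insert, Finset.mem_singleton]
    rw [abs_eq (by norm_num)]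
    omega
  rw [this, Finset.sum_pair (by omega)]

lemma fin_s {X Y F G Z K D : ℂ} (hZ : Z ≠ 0) (hD : D ≠ 0) (h : X * F + Y * G = Z * D * K) :
    X / (Z * D) * F + Y / (Z * D) * G = K * 1 := by
  field_simp
  linear_combination h

lemma fin_t {X Y F G Z D a0 p0 K1 K2 b1 b2 b3 b4 : ℂ} (hZ : Z ≠ 0) (hD : D ≠ 0) (ha : a0 ≠ 0)
    (hp : p0 ≠ 0)
    (h : (X * F + Y * G) * (a0 * p0) = Z * D * (K1 * (b1 * b2) + K2 * (b3 * b4))) :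
    X / (Z * D) * F + Y / (Z * D) * G = K1 * (b1 * b2 / (a0 * p0)) + K2 * (b3 * b4 / (a0 * p0)) := by
  field_simp
  linear_combination h

lemma w_red {s C a0 p0 b b' : ℂ} (hs : s ≠ 0) (hC : C ≠ 0) :
    C * (s * b) * (C * b') / (C * (s * a0) * (C * p0)) = b * b' / (a0 * p0) := by
  rw [show C * (s * b) * (C * b') = (C * s * C) * (b * b') by ring,
    show C * (s * a0) * (C * p0) = (C * s * C) * (a0 * p0) by ring]
  exact mul_div_mul_left _ _ (by simp [hs, hC])

/-- Baxter's vertex-face correspondence. -/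
theorem vertex_face_correspondence (τ : ℂ) (r : ℝ) (hτ : 0 < τ.im) (hr : 0 < r)
    (u v : ℂ) (e1 e2 : ℤ) (he1 : e1 = 1 ∨ e1 = -1) (he2 : e2 = 1 ∨ e2 = -1)
    (a b c : ℤ) (hab : |a - b| = 1) (hbc : |b - c| = 1)
    (h1 : th2 0 (τ / 2) ≠ 0)
    (h2 : th1 ((1 + (u - v)) / (2 * (r : ℂ))) (τ / 2) ≠ 0)
    (h3 : th2 ((1 + (u - v)) / (2 * (r : ℂ))) (τ / 2) ≠ 0)
    (h4 : br τ r (a : ℂ) ≠ 0) (h5 : br τ r (1 + (u - v)) ≠ 0) :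
    ∑ e1' ∈ ({1, -1} : Finset ℤ), ∑ e2' ∈ ({1, -1} : Finset ℤ),
        Rbar τ r (u - v) e1 e2 e1' e2' * psi τ r u e1' a b * psi τ r v e2' b c =
      ∑ b' ∈ ({a - 1, a + 1} : Finset ℤ).filter fun b' => |b' - c| = 1,
        psi τ r v e2 a b' * psi τ r u e1 b' c * Wb τ r (u - v) a b b' c := by
  have hσ : 0 < (τ / 2).im := by
    have : (τ / 2).im = τ.im / 2 := by simp
    rw [this]; linarith
  have hr0 : (r : ℂ) ≠ 0 := by exact_mod_cast hr.ne'
  obtain ⟨s, hs, rfl⟩ : ∃ s : ℤ, (s = 1 ∨ s = -1) ∧ b = a + s := by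
    rw [abs_eq (by norm_num)] at hab
    exact ⟨b - a, by omega, by omega⟩
  have hss : (s : ℂ) * s = 1 := by rcases hs with rfl | rfl <;> norm_num
  have hs0 : (s : ℂ) ≠ 0 := by rcases hs with rfl | rfl <;> norm_num
  have hP : (1 + (u - v)) / (2 * (r : ℂ)) = 1 / (2 * (r : ℂ)) + (u - v) / (2 * (r : ℂ)) := by ring
  rw [hP] at h2 h3
  obtain ⟨A, hA⟩ : ∃ A : ℂ, A = s * a / (2 * r) := ⟨_, rfl⟩
  obtain ⟨η, hη⟩ : ∃ A : ℂ, A = 1 / (2 * (r : ℂ)) := ⟨_, rfl⟩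
  obtain ⟨w, hw⟩ : ∃ A : ℂ, A = (u - v) / (2 * (r : ℂ)) := ⟨_, rfl⟩
  obtain ⟨V, hV⟩ : ∃ A : ℂ, A = v / (2 * (r : ℂ)) := ⟨_, rfl⟩
  have hc : c = a + 2 * s ∨ c = a := by
    rw [abs_eq (by norm_num)] at hbc
    omega
  have pu1p := psi_p hσ r u a (a + s) s hs (A - (V + w))
    (by rw [hA, hV, hw]; push_cast; field_simp; linear_combination (-a : ℂ) * hss)
  have pu1m := psi_m hσ r u a (a + s) s hs (A - (V + w))
    (by rw [hA, hV, hw]; push_cast; field_simp; linear_combination (-a : ℂ) * hss)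
  have pv1p := psi_p hσ r v a (a + s) s hs (A - V)
    (by rw [hA, hV]; push_cast; field_simp; linear_combination (-a : ℂ) * hss)
  have pv1m := psi_m hσ r v a (a + s) s hs (A - V)
    (by rw [hA, hV]; push_cast; field_simp; linear_combination (-a : ℂ) * hss)
  rcases hc with rfl | rfl
  · have pu2p := psi_p hσ r u (a + s) (a + 2 * s) s hs (A + η - (V + w))
      (by rw [hA, hV, hw, hη]; push_cast; field_simp; linear_combination (-a : ℂ) * hss)
    have pu2m := psi_m hσ r u (a + s) (a + 2 * s) s hs (A + η - (V + w))
      (by rw [hA, hV, hw, hη]; push_cast; field_simp; linear_combination (-a : ℂ) * hss)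
    have pv2p := psi_p hσ r v (a + s) (a + 2 * s) s hs (A + η - V)
      (by rw [hA, hV, hη]; push_cast; field_simp; linear_combination (-a : ℂ) * hss)
    have pv2m := psi_m hσ r v (a + s) (a + 2 * s) s hs (A + η - V)
      (by rw [hA, hV, hη]; push_cast; field_simp; linear_combination (-a : ℂ) * hss)
    rw [sum_straight a s hs, Wb_straight τ r _ a s hs]
    have E1 : A - (V + w) + η + w = A + η - V := by ring
    have E2 : A - (V + w) + w = A - V := by ring
    have E3 : A - (V + w) + η = A + η - (V + w) := by ring
    rcases he1 with rfl | rfl <;> rcases he2 with rfl | rfl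
    · rw [R11, pu1p, pu1m, pv2p, pv2m, pv1p, pu2p]
      unfold aw dw
      rw [hP, ← hη, ← hw]
      rw [← hη, ← hw] at h3
      refine fin_s h1 h3 ?_
      have := S00 (A - (V + w)) η w hσ
      rw [E1, E2, E3] at this
      linear_combination this
    · rw [R12, pu1p, pu1m, pv2p, pv2m, pv1m, pu2p]
      unfold bw cw
      rw [hP, ← hη, ← hw]
      rw [← hη, ← hw] at h2
      refine fin_s h1 h2 ?_
      have := S03 (A - (V + w)) η w hσ
      rw [E1, E2, E3] at this
      linear_combination this
    · rw [R21, pu1p, pu1m, pv2p, pv2m, pv1p, pu2m]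
      unfold bw cw
      rw [hP, ← hη, ← hw]
      rw [← hη, ← hw] at h2
      refine fin_s h1 h2 ?_
      have := S30 (A - (V + w)) η w hσ
      rw [E1, E2, E3] at this
      linear_combination this
    · rw [R22, pu1p, pu1m, pv2p, pv2m, pv1m, pu2m]
      unfold aw dw
      rw [hP, ← hη, ← hw]
      rw [← hη, ← hw] at h3
      refine fin_s h1 h3 ?_
      have := S33 (A - (V + w)) η w hσ
      rw [E1, E2, E3] at this
      linear_combination this
  · skip
    have pu2p := psi_p hσ r u (c + s) c s hs (A + η + (V + w))
      (by rw [hA, hV, hw, hη]; push_cast; field_simp; linear_combination (-c : ℂ) * hss)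
    have pu2m := psi_m hσ r u (c + s) c s hs (A + η + (V + w))
      (by rw [hA, hV, hw, hη]; push_cast; field_simp; linear_combination (-c : ℂ) * hss)
    have pv2p := psi_p hσ r v (c + s) c s hs (A + η + V)
      (by rw [hA, hV, hη]; push_cast; field_simp; linear_combination (-c : ℂ) * hss)
    have pv2m := psi_m hσ r v (c + s) c s hs (A + η + V)
      (by rw [hA, hV, hη]; push_cast; field_simp; linear_combination (-c : ℂ) * hss)
    have pv3p := psi_p hσ r v c (c - s) s hs (A + V)
      (by rw [hA, hV]; push_cast; field_simp; linear_combination (-c : ℂ) * hss)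
    have pv3m := psi_m hσ r v c (c - s) s hs (A + V)
      (by rw [hA, hV]; push_cast; field_simp; linear_combination (-c : ℂ) * hss)
    have pu4p := psi_p hσ r u (c - s) c s hs (A - η - (V + w))
      (by rw [hA, hV, hw, hη]; push_cast; field_simp; linear_combination (-c : ℂ) * hss)
    have pu4m := psi_m hσ r u (c - s) c s hs (A - η - (V + w))
      (by rw [hA, hV, hw, hη]; push_cast; field_simp; linear_combination (-c : ℂ) * hss)
    rw [sum_turn c s hs, Wb_t1 τ r _ c s hs, Wb_t2 τ r _ c s hs]
    have hτ2 : 2 * (τ / 2) = τ := by ring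
    obtain ⟨C, hC⟩ := br_eq τ r hτ hr
    rw [hC] at h4 h5
    have hC0 : C ≠ 0 := left_ne_zero_of_mul h4
    have ea : (c : ℂ) / r = s * (2 * A) := by
      rw [hA]; field_simp; linear_combination (-c : ℂ) * hss
    have eb : ((c : ℂ) - s * (u - v)) / r = s * (2 * A - 2 * w) := by
      rw [hA, hw]; field_simp; linear_combination (-c : ℂ) * hss
    have ec : ((c : ℂ) + s) / r = s * (2 * A + 2 * η) := by
      rw [hA, hη]; field_simp; linear_combination (-c : ℂ) * hss
    have ed : (1 : ℂ) / r = 2 * η := by rw [hη]; field_simp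
    have ee : (u - v) / r = 2 * w := by rw [hw]; field_simp
    have ef : (1 + (u - v)) / r = 2 * (η + w) := by rw [hη, hw]; field_simp
    rw [ea, th1_s s hs] at h4
    rw [ef] at h5
    have h4' : th1 (2 * A) τ ≠ 0 := right_ne_zero_of_mul (right_ne_zero_of_mul h4)
    have h5' : th1 (2 * (η + w)) τ ≠ 0 := right_ne_zero_of_mul h5
    simp only [hC]
    rw [ea, eb, ec, ed, ee, ef, th1_s s hs, th1_s s hs, th1_s s hs, w_red hs0 hC0, w_red hs0 hC0]
    rcases he1 with rfl | rfl <;> rcases he2 with rfl | rfl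
    · rw [R11, pu1p, pu1m, pv2p, pv2m, pv1p, pu2p, pv3p, pu4p]
      unfold aw dw
      rw [hP, ← hη, ← hw]
      rw [← hη, ← hw] at h3
      refine fin_t h1 h3 h4' h5' ?_
      have := T00 A η w V hσ
      rw [hτ2] at this
      linear_combination this
    · rw [R12, pu1p, pu1m, pv2p, pv2m, pv1m, pu2p, pv3m, pu4p]
      unfold bw cw
      rw [hP, ← hη, ← hw]
      rw [← hη, ← hw] at h2
      refine fin_t h1 h2 h4' h5' ?_
      have := T03 A η w V hσ
      rw [hτ2] at this
      linear_combination this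
    · rw [R21, pu1p, pu1m, pv2p, pv2m, pv1p, pu2m, pv3p, pu4m]
      unfold bw cw
      rw [hP, ← hη, ← hw]
      rw [← hη, ← hw] at h2
      refine fin_t h1 h2 h4' h5' ?_
      have := T30 A η w V hσ
      rw [hτ2] at this
      linear_combination this
    · rw [R22, pu1p, pu1m, pv2p, pv2m, pv1m, pu2m, pv3m, pu4m]
      unfold aw dw
      rw [hP, ← hη, ← hw]
      rw [← hη, ← hw] at h3
      refine fin_t h1 h3 h4' h5' ?_
      have := T33 A η w V hσ
      rw [hτ2] at this
      linear_combination this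

end Ell
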